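/- Let p be a prime, ℤ_(p) the localization of ℤ at the prime ideal (p), and V := ℤ_(p)[u₁, u₂, u₃, …] a polynomial ring on countably many generators; set u₀ := p, and for r ≥ 0 let V_r := ℤ_(p)[u₁, …, u_r] ⊆ V. Define V-modules M_n recursively by M₀ := V and M_{n+1} := the cokernel of the localization map λ_n : M_n → M_n[u_n⁻¹] (localization of the module M_n inverting u_n). Then: (a) for every n ≥ 0 the map λ_n is injective (so that M_n is the module usually written V/(u₀^∞, …, u_{n−1}^∞)); and (b) whenever n > r, the map λ_n is a split injection of V_r-modules, i.e. admits a V_r-linear retraction. (These are the key local computations underlying the algebraic chromatic convergence theorem.) -/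

import Mathlib

noncomputable section

/-- `ℤ_(p)`: the localization of `ℤ` at the prime ideal `(p)`. -/
abbrev Zloc (p : ℕ) (hp : p.Prime) : Type :=
  @Localization.AtPrime ℤ _ (Ideal.span {(p : ℤ)})
    ((Ideal.span_singleton_prime (by exact_mod_cast hp.ne_zero)).mpr
      (Int.prime_iff_natAbs_prime.mpr (by simpa using hp)))

/-- The polynomial ring `V = ℤ_(p)[u₁, u₂, u₃, …]`, where `uᵢ := X (i - 1)`. -/
abbrev Vring (p : ℕ) (hp : p.Prime) : Type := MvPolynomial ℕ (Zloc p hp)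

/-- The sequence `u₀ := p`, `u_k := X (k-1)` (representing `u_k`) for `k ≥ 1`. -/
def uElt (p : ℕ) (hp : p.Prime) : ℕ → Vring p hp :=
  fun n => if n = 0 then (p : Vring p hp) else MvPolynomial.X (n - 1)

/-- The subring `V_r = ℤ_(p)[u₁, …, u_r] ⊆ V`. -/
def VrSub (p : ℕ) (hp : p.Prime) (r : ℕ) : Subalgebra (Zloc p hp) (Vring p hp) :=
  Algebra.adjoin _ {x | ∃ i < r, x = MvPolynomial.X i}

/-- The tower of `V`-modules `M₀ := V` and
`M_{n+1} := coker (M_n → M_n[u_n⁻¹])`, so that `M_n = V/(u₀^∞, …, u_{n-1}^∞)`. -/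
def Mmod (p : ℕ) (hp : p.Prime) : ℕ → ModuleCat (Vring p hp)
  | 0 => ModuleCat.of (Vring p hp) (Vring p hp)
  | n + 1 =>
    ModuleCat.of (Vring p hp)
      ((LocalizedModule (Submonoid.powers (uElt p hp n)) (Mmod p hp n)) ⧸
        LinearMap.range
          (LocalizedModule.mkLinearMap (Submonoid.powers (uElt p hp n)) (Mmod p hp n)))

/-!
Division by `X k`, discarding the monomials not divisible by it, is a left inverse of multiplication
by `X k` on `S[X₀, X₁, …]` that is linear over the polynomials not involving `X k`. Such a left
inverse `d` passes to localizations at elements of that coefficient ring and to the resulting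
cokernels, so it survives through the tower up to the stage where `X k` itself is inverted; there
`x / X k ^ n ↦ d^[n] x` is the retraction. At stage `0` the element `p` is a nonzerodivisor.
-/

/-- Multiplication by `w` on `M` is a split injection of `A`-modules. The coefficients `A` are
separate from the ring containing `w`, since `w` usually does not come from `A`. -/
def IsSplitSMul (A : Type*) {R : Type*} (M : Type*) [Semiring A] [AddCommMonoid M] [Module A M]
    [SMul R M] (w : R) : Prop :=
  ∃ d : Module.End A M, Function.LeftInverse d (w • ·)

theorem IsSplitSMul.isSMulRegular {A R M : Type*} [Semiring A] [AddCommMonoid M] [Module A M]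
    [SMul R M] {w : R} (h : IsSplitSMul A M w) : IsSMulRegular M w :=
  let ⟨_, hd⟩ := h
  hd.injective

theorem iterate_eq_iterate_of_pow_smul_eq {R M : Type*} [Monoid R] [MulAction R M] {w : R}
    {d : M → M} (hd : Function.LeftInverse d (w • ·)) {a b : ℕ} {x y : M}
    (h : w ^ b • x = w ^ a • y) : d^[a] x = d^[b] y := by
  have cancel (n : ℕ) (z : M) : d^[n] (w ^ n • z) = z := by
    simpa only [smul_iterate] using hd.iterate n z
  rw [← cancel b x, h, ← Function.iterate_add_apply, add_comm, Function.iterate_add_apply, cancel]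

section Localization

variable {A R M M' : Type*} [CommSemiring R] [AddCommMonoid M] [Module R M] [AddCommMonoid M']
  [Module R M']

theorem injective_of_isLocalizedModule_powers {w : R} (h : IsSMulRegular M w) (f : M →ₗ[R] M')
    [IsLocalizedModule (.powers w) f] : Function.Injective f := by
  rw [IsLocalizedModule.injective_iff_isRegular (.powers w)]
  rintro ⟨_, n, rfl⟩
  exact h.pow n

/-- If `d` splits multiplication by `w`, the retraction sends `x / w ^ n` to `d^[n] x`. -/
theorem IsSplitSMul.exists_retraction [CommSemiring A] [Algebra A R] [Module A M] [Module A M']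
    [IsScalarTower A R M] [IsScalarTower A R M'] {w : R} (h : IsSplitSMul A M w)
    (f : M →ₗ[R] M') [IsLocalizedModule (.powers w) f] :
    ∃ ρ : M' →ₗ[A] M, Function.LeftInverse ρ f := by
  have hf := injective_of_isLocalizedModule_powers h.isSMulRegular f
  obtain ⟨d, hd⟩ := h
  have exists_frac (y : M') : ∃ (n : ℕ) (x : M), w ^ n • y = f x := by
    obtain ⟨⟨x, _, n, rfl⟩, hx⟩ := IsLocalizedModule.surj (.powers w) f y
    exact ⟨n, x, hx⟩
  choose n x hx using exists_frac
  let ρ (y : M') : M := (d ^ n y) (x y)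
  have ρ_eq {y : M'} {a : ℕ} {z : M} (hz : w ^ a • y = f z) : ρ y = (d ^ a) z := by
    simp only [ρ, Module.End.pow_apply]
    apply iterate_eq_iterate_of_pow_smul_eq hd
    apply hf
    rw [map_smul, map_smul, ← hx, ← hz, smul_comm]
  refine ⟨⟨⟨ρ, fun y z => ?_⟩, fun c y => ?_⟩, fun z => ?_⟩
  · have hy : w ^ (n y + n z) • y = f (w ^ n z • x y) := by
      rw [map_smul, ← hx, smul_smul, pow_add, mul_comm]
    have hz : w ^ (n y + n z) • z = f (w ^ n y • x z) := by
      rw [map_smul, ← hx, smul_smul, pow_add]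
    have hyz : w ^ (n y + n z) • (y + z) = f (w ^ n z • x y + w ^ n y • x z) := by
      rw [smul_add, hy, hz, map_add]
    rw [ρ_eq hyz, map_add, ← ρ_eq hy, ← ρ_eq hz]
  · have hcy : w ^ n y • c • y = f (c • x y) := by
      rw [smul_comm, hx, LinearMap.map_smul_of_tower]
    exact (ρ_eq hcy).trans (map_smul _ _ _)
  · exact ρ_eq (a := 0) (by rw [pow_zero, one_smul])

end Localization

section Cokernel

variable {A R M M' : Type*} [CommRing R] [AddCommGroup M] [Module R M] [AddCommGroup M']
  [Module R M']

theorem isSplitSMul_quotient [Ring A] [SMul A R] [Module A M] [IsScalarTower A R M] {w : R}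
    {d : Module.End A M} (hd : Function.LeftInverse d (w • ·)) (N : Submodule R M)
    (hN : ∀ x ∈ N, d x ∈ N) : IsSplitSMul A (M ⧸ N) w := by
  refine ⟨(N.restrictScalars A).mapQ (N.restrictScalars A) d hN, fun x => ?_⟩
  induction x using Submodule.Quotient.induction_on with
  | H x => exact congrArg Submodule.Quotient.mk (hd x)

theorem IsSplitSMul.cokernel [CommRing A] [Algebra A R] [Module A M] [Module A M']
    [IsScalarTower A R M] [IsScalarTower A R M'] {w : R} (h : IsSplitSMul A M w) (v : A)
    (f : M →ₗ[R] M') [IsLocalizedModule (.powers (algebraMap A R v)) f] :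
    IsSplitSMul A (M' ⧸ LinearMap.range f) w := by
  obtain ⟨d, hd⟩ := h
  let S := Submonoid.powers v
  let fA := f.restrictScalars A
  have : IsLocalizedModule S fA := IsLocalizedModule.restrictScalars_powers v f
  have map_f (x : M) : IsLocalizedModule.map S fA fA d (f x) = f (d x) :=
    IsLocalizedModule.map_apply S fA fA d x
  have left_inv : IsLocalizedModule.map S fA fA d ∘ₗ Algebra.lsmul A A M' w = LinearMap.id := by
    refine IsLocalizedModule.linearMap_ext S fA fA (LinearMap.ext fun x => ?_)
    change IsLocalizedModule.map S fA fA d (w • f x) = f x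
    rw [← map_smul, map_f, hd]
  refine isSplitSMul_quotient (d := IsLocalizedModule.map S fA fA d)
    (LinearMap.congr_fun left_inv) _ ?_
  rintro _ ⟨x, rfl⟩
  exact ⟨d x, (map_f x).symm⟩

end Cokernel

section Tower

universe v

/-- The cokernel `M/(w^∞)` of the localization map `M → M[w⁻¹]`. It is bundled so that the
construction can be iterated and transported along equalities of modules. -/
def localizationCokernel {R : Type v} [CommRing R] (w : R) (M : ModuleCat.{v} R) :
    ModuleCat.{v} R :=
  ModuleCat.of R (LocalizedModule (Submonoid.powers w) M ⧸
    LinearMap.range (LocalizedModule.mkLinearMap (Submonoid.powers w) M))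

/-- The tower `T₀ = R`, `T_{n+1} = T_n/(u_n^∞)` of a sequence `u` in a commutative ring `R`, so
that `T_n` is the module usually written `R/(u₀^∞, …, u_{n-1}^∞)`. -/
def cokernelTower {R : Type v} [CommRing R] (u : ℕ → R) : ℕ → ModuleCat.{v} R
  | 0 => ModuleCat.of R R
  | n + 1 => localizationCokernel (u n) (cokernelTower u n)

variable {K : Type*} {R : Type v} [CommRing K] [CommRing R] [Algebra K R]
  {A : Subalgebra K R} {w : R}

theorem IsSplitSMul.localizationCokernel {M : ModuleCat.{v} R} (h : IsSplitSMul A M w) {v : R}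
    (hv : v ∈ A) : IsSplitSMul A (localizationCokernel v M) w :=
  have : IsLocalizedModule (.powers (algebraMap A R ⟨v, hv⟩))
      (LocalizedModule.mkLinearMap (.powers v) M) := localizedModuleIsLocalizedModule _
  h.cokernel ⟨v, hv⟩ (LocalizedModule.mkLinearMap (.powers v) M)

theorem IsSplitSMul.cokernelTower (h : IsSplitSMul A R w) {u : ℕ → R} {n : ℕ}
    (hu : ∀ i < n, u i ∈ A) : IsSplitSMul A (cokernelTower u n) w := by
  induction n with
  | zero => exact h
  | succ n ih => exact (ih fun i hi => hu i (by omega)).localizationCokernel (hu n (by omega))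

end Tower

section Polynomial

open MvPolynomial

theorem degreeOf_modMonomial_single {σ S : Type*} [CommSemiring S] (k : σ) (f : MvPolynomial σ S) :
    degreeOf k (f.modMonomial (.single k 1)) = 0 := by
  refine Nat.le_zero.mp (degreeOf_le_iff.mpr fun m hm => ?_)
  contrapose! hm
  rw [notMem_support_iff]
  exact coeff_modMonomial_of_le _ (Finsupp.single_le_iff.mpr hm)

theorem mul_divMonomial_single {σ S : Type*} [CommRing S] {k : σ} {c : MvPolynomial σ S}
    (hc : degreeOf k c = 0) (f : MvPolynomial σ S) :
    (c * f).divMonomial (.single k 1) = c * f.divMonomial (.single k 1) := by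
  let q := f.divMonomial (.single k 1)
  let r := f.modMonomial (.single k 1)
  have hcf : c * f = X k * (c * q) + c * r := by
    rw [mul_left_comm, ← mul_add, divMonomial_add_modMonomial_single]
  have hcr : degreeOf k (c * r) ≤ 0 := by
    simpa only [hc, r, degreeOf_modMonomial_single] using degreeOf_mul_le k c r
  exact (eq_divMonomial_single hcf fun m hm => Nat.le_zero.mp (degreeOf_le_iff.mp hcr m hm)).symm

theorem isSplitSMul_X {σ S : Type*} [CommRing S] (k : σ) :
    IsSplitSMul (supported S {k}ᶜ) (MvPolynomial σ S) (X k : MvPolynomial σ S) := by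
  refine ⟨⟨⟨(divMonomial · (.single k 1)), (add_divMonomial · · _)⟩, ?_⟩, X_mul_divMonomial k⟩
  rintro ⟨c, hc⟩ f
  have hk : k ∉ c.vars := fun hk => mem_supported.mp hc hk rfl
  exact mul_divMonomial_single (by simpa [mem_vars_iff_degreeOf_ne_zero] using hk) f

theorem isSMulRegular_C {σ S : Type*} [CommSemiring S] {a : S} (ha : IsSMulRegular S a) :
    IsSMulRegular (MvPolynomial σ S) (C a : MvPolynomial σ S) := by
  intro f g hfg
  ext m
  apply ha
  simpa only [smul_eq_mul, coeff_C_mul] using congrArg (coeff m) hfg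

theorem chromatic_convergence_local_computations_general {S : Type*} [CommRing S] {a : S}
    (ha : IsSMulRegular S a) {u : ℕ → MvPolynomial ℕ S} (hu₀ : u 0 = C a)
    (hu : ∀ k, u (k + 1) = X k) :
    (∀ n, Function.Injective
      (LocalizedModule.mkLinearMap (Submonoid.powers (u n)) (cokernelTower u n))) ∧
    ∀ k, ∃ ρ : LocalizedModule (Submonoid.powers (u (k + 1))) (cokernelTower u (k + 1))
        →ₗ[supported S {k}ᶜ] cokernelTower u (k + 1),
      Function.LeftInverse ρ (LocalizedModule.mkLinearMap
        (Submonoid.powers (u (k + 1))) (cokernelTower u (k + 1))) := by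
  have mem_supported (k i : ℕ) (hi : i < k + 1) : u i ∈ supported S {k}ᶜ := by
    cases i with
    | zero => exact hu₀ ▸ (supported S {k}ᶜ).algebraMap_mem a
    | succ i => exact hu i ▸ Algebra.subset_adjoin ⟨i, by grind, rfl⟩
  have split (k : ℕ) : IsSplitSMul (supported S {k}ᶜ) (cokernelTower u (k + 1)) (u (k + 1)) :=
    .cokernelTower (hu k ▸ isSplitSMul_X k) (mem_supported k)
  have regular : ∀ n, IsSMulRegular (cokernelTower u n) (u n)
    | 0 => hu₀ ▸ isSMulRegular_C ha
    | k + 1 => (split k).isSMulRegular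
  exact ⟨fun n => injective_of_isLocalizedModule_powers (regular n) _,
    fun k => (split k).exists_retraction _⟩

end Polynomial

theorem Mmod_eq_cokernelTower (p : ℕ) (hp : p.Prime) : Mmod p hp = cokernelTower (uElt p hp) := by
  funext n
  induction n with
  | zero => rfl
  | succ n ih => exact congrArg (localizationCokernel (uElt p hp n)) ih

theorem isSMulRegular_natCast_Zloc (p : ℕ) (hp : p.Prime) :
    IsSMulRegular (Zloc p hp) (p : Zloc p hp) := by
  have hp_int : IsSMulRegular ℤ (p : ℤ) := .of_ne_zero (by exact_mod_cast hp.ne_zero)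
  have : (Ideal.span {(p : ℤ)}).IsPrime :=
    (Ideal.span_singleton_prime (by exact_mod_cast hp.ne_zero)).mpr (Nat.prime_iff_prime_int.mp hp)
  simpa using hp_int.of_isLocalization (Zloc p hp) (Ideal.span {(p : ℤ)}).primeCompl

theorem VrSub_le_supported (p : ℕ) (hp : p.Prime) {r k : ℕ} (hr : r ≤ k) :
    VrSub p hp r ≤ MvPolynomial.supported (Zloc p hp) {k}ᶜ := by
  apply Algebra.adjoin_mono
  rintro _ ⟨i, hi, rfl⟩
  exact ⟨i, (hi.trans_le hr).ne, rfl⟩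

/-- The key local computations underlying algebraic chromatic convergence:
(a) each localization map `λ_n : M_n → M_n[u_n⁻¹]` is injective, and
(b) for `n > r` it is a split injection of `V_r`-modules, i.e. admits a
`V_r`-linear retraction. -/
theorem chromatic_convergence_local_computations (p : ℕ) (hp : p.Prime) :
    (∀ n : ℕ, Function.Injective
      (LocalizedModule.mkLinearMap (Submonoid.powers (uElt p hp n)) (Mmod p hp n))) ∧
    ∀ r n : ℕ, r < n →
      ∃ ρ : LocalizedModule (Submonoid.powers (uElt p hp n)) (Mmod p hp n) →+
          Mmod p hp n,
        (∀ c : Vring p hp, c ∈ VrSub p hp r →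
          ∀ x, ρ (c • x) = c • ρ x) ∧
        ∀ x, ρ (LocalizedModule.mkLinearMap
          (Submonoid.powers (uElt p hp n)) (Mmod p hp n) x) = x := by
  rw [Mmod_eq_cokernelTower]
  obtain ⟨injective, split⟩ := chromatic_convergence_local_computations_general
    (isSMulRegular_natCast_Zloc p hp) (u := uElt p hp) (map_natCast MvPolynomial.C p).symm
    fun _ => rfl
  refine ⟨injective, fun r n hrn => ?_⟩
  obtain ⟨k, rfl⟩ := Nat.exists_eq_add_one_of_ne_zero (Nat.ne_zero_of_lt hrn)
  obtain ⟨ρ, hρ⟩ := split k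
  exact ⟨ρ, fun c hc => ρ.map_smul ⟨c, VrSub_le_supported p hp (Nat.le_of_lt_succ hrn) hc⟩, hρ⟩
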